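/- Let d, k ≥ 1, s ≥ 2, and let S₁,…,S_k be pairwise distinct nonempty subsets of {1,…,d}, each of size exactly s; let h be the minimum size of a hitting set of this family. For an integer M ≥ 1, let 𝒳_M ⊂ ℝ^d be the multiset consisting of the d standard basis vectors e₁,…,e_d together with M copies of μ₀ := 0 and, for each i ∈ {1,…,k}, M copies of μ_i := Σ_{j∈S_i} e_j. Let OPT_M denote the minimum, over all threshold trees T with at most k+1 leaves, of Σ over leaves ℓ of T of inf_{μ∈ℝ^d} Σ_{x∈𝒳_M∩B_ℓ} ‖x − μ‖₁. Then: (a) OPT_M ≤ d + h·(s−2) for every M ≥ 1; and (b) for every ε > 0 there exists M₀ such that OPT_M ≥ d + h·(s−2−ε) for every M ≥ M₀. -/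

import Mathlib

/-- A threshold tree in `ℝ^d`: a finite binary tree whose internal nodes are
labelled by threshold cuts `(i, θ)`. -/
inductive ThresholdTree (d : ℕ) : Type
  | leaf : ThresholdTree d
  | node (i : Fin d) (θ : ℝ) (l r : ThresholdTree d) : ThresholdTree d

namespace ThresholdTree

/-- The list of regions of the leaves of a threshold tree: the root has region
`ℝ^d`, and a node labelled `(i, θ)` splits its region `B` into
`B ∩ {x | x i ≤ θ}` (left child) and `B ∩ {x | θ < x i}` (right child). -/
def leaves {d : ℕ} : ThresholdTree d → List (Set (Fin d → ℝ))
  | leaf => [Set.univ]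
  | node i θ l r =>
      (l.leaves.map fun B => B ∩ {x | x i ≤ θ}) ++
      (r.leaves.map fun B => B ∩ {x | θ < x i})

/-- A threshold tree separates a finite set `𝒰` of centers if every leaf region
contains exactly one point of `𝒰`. -/
def Separates {d : ℕ} (T : ThresholdTree d) (𝒰 : Finset (Fin d → ℝ)) : Prop :=
  ∀ B ∈ T.leaves, ∃! u, u ∈ 𝒰 ∧ u ∈ B

end ThresholdTree

/-- The optimal 1-median cost of the points of the multiset `𝒳` lying in the
region `B`: `inf_{μ∈ℝ^d} Σ_{x∈𝒳∩B} ‖x − μ‖₁`. -/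
noncomputable def leafMedCost {d : ℕ} (𝒳 : Multiset (Fin d → ℝ))
    (B : Set (Fin d → ℝ)) : ℝ :=
  ⨅ μ : Fin d → ℝ,
    (letI := Classical.decPred (fun x : Fin d → ℝ => x ∈ B)
     ((𝒳.filter (fun x => x ∈ B)).map (fun x => ∑ i, |x i - μ i|)).sum)

/-- The explainable medians cost of a threshold tree `T` on `𝒳`: the sum over
leaves of the optimal 1-median cost of the points in the leaf's region. -/
noncomputable def explCost {d : ℕ} (T : ThresholdTree d)
    (𝒳 : Multiset (Fin d → ℝ)) : ℝ :=
  (T.leaves.map (leafMedCost 𝒳)).sum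

/-- The 0/1 indicator vector of a subset `S` of the coordinates. -/
def ind {d : ℕ} (S : Finset (Fin d)) : Fin d → ℝ := fun j => if j ∈ S then 1 else 0

/-- The data multiset `𝒳_M`: the `d` standard basis vectors, together with `M`
copies of `μ₀ := 0` and `M` copies of `μ_i := Σ_{j ∈ Sᵢ} e_j` for each `i`. -/
def dataSet (d k M : ℕ) (Sets : Fin k → Finset (Fin d)) : Multiset (Fin d → ℝ) :=
  (Finset.univ.val.map (fun j : Fin d => ind {j})) +
    M • ((fun _ => (0 : ℝ)) ::ₘ Finset.univ.val.map (fun i : Fin k => ind (Sets i)))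

/-- `OPT_M`: the minimum, over threshold trees with at most `k+1` leaves, of the
explainable medians cost on `𝒳_M`. -/
noncomputable def OPTM (d k M : ℕ) (Sets : Fin k → Finset (Fin d)) : ℝ :=
  sInf {c : ℝ | ∃ T : ThresholdTree d,
    T.leaves.length ≤ k + 1 ∧ c = explCost T (dataSet d k M Sets)}

/-!
With `M` large, every center must get its own leaf: two distinct centers in one leaf cost at
least `M`. A tree separating the centers then pays, for each basis vector, its distance to the
center of its leaf, which is `1` for the center `0`, and at least `s - 1` for a center `ind (Sets i)`
(with equality when the basis vector lies in the support of that center).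

Leaf regions are products of subsets of the line, so the leaf of `0` can exclude `ind S` only by
excluding some `e_j` with `j ∈ S`. Hence the `e_j` outside the leaf of `0` form a hitting set.
Conversely, cutting the coordinates of a hitting set `H` one after the other removes all centers
`ind (Sets i)` from the leaf of `0`, together with only those `e_j` for which `j ∈ H`.
-/

namespace ThresholdTree

variable {d : ℕ} {T : ThresholdTree d}

/-- The region of the leaf reached by `x`. -/
noncomputable def leafOf : ThresholdTree d → (Fin d → ℝ) → Set (Fin d → ℝ)
  | leaf, _ => Set.univ
  | node i θ l r, x => if x i ≤ θ then l.leafOf x ∩ {y | y i ≤ θ} else r.leafOf x ∩ {y | θ < y i}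

lemma leafOf_mem_leaves (T : ThresholdTree d) (x : Fin d → ℝ) : T.leafOf x ∈ T.leaves := by
  induction T with
  | leaf => simp [leafOf, leaves]
  | node i θ l r hl hr =>
    simp only [leafOf, leaves, List.mem_append, List.mem_map]
    split_ifs
    · exact .inl ⟨_, hl, rfl⟩
    · exact .inr ⟨_, hr, rfl⟩

lemma mem_leafOf (T : ThresholdTree d) (x : Fin d → ℝ) : x ∈ T.leafOf x := by
  induction T with
  | leaf => exact Set.mem_univ x
  | node i θ l r hl hr =>
    simp only [leafOf]
    split_ifs with hx
    · exact ⟨hl, hx⟩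
    · exact ⟨hr, not_le.mp hx⟩

lemma leafOf_eq {B : Set (Fin d → ℝ)} {x : Fin d → ℝ} (hB : B ∈ T.leaves) (hx : x ∈ B) :
    T.leafOf x = B := by
  induction T generalizing B with
  | leaf => simp_all [leafOf, leaves]
  | node i θ l r hl hr =>
    simp only [leaves, List.mem_append, List.mem_map] at hB
    rcases hB with ⟨B, hB, rfl⟩ | ⟨B, hB, rfl⟩
    · obtain ⟨hxB, hxi : x i ≤ θ⟩ := hx
      rw [leafOf, if_pos hxi, hl hB hxB]
    · obtain ⟨hxB, hxi : θ < x i⟩ := hx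
      rw [leafOf, if_neg hxi.not_ge, hr hB hxB]

lemma mem_leafOf_comm {x y : Fin d → ℝ} : x ∈ T.leafOf y ↔ y ∈ T.leafOf x := by
  constructor <;> intro h <;> rw [leafOf_eq (leafOf_mem_leaves _ _) h] <;> exact mem_leafOf _ _

lemma exists_eq_pi_of_mem_leaves {B : Set (Fin d → ℝ)} (hB : B ∈ T.leaves) :
    ∃ I : Fin d → Set ℝ, B = Set.univ.pi I := by
  induction T generalizing B with
  | leaf => exact ⟨fun _ => Set.univ, by simpa [leaves] using hB⟩
  | node i θ l r hl hr =>
    simp only [leaves, List.mem_append, List.mem_map] at hB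
    rcases hB with ⟨B, hB, rfl⟩ | ⟨B, hB, rfl⟩
    · obtain ⟨I, rfl⟩ := hl hB
      exact ⟨fun j => I j ∩ {t | j = i → t ≤ θ}, by ext; simp [forall_and]⟩
    · obtain ⟨I, rfl⟩ := hr hB
      exact ⟨fun j => I j ∩ {t | j = i → θ < t}, by ext; simp [forall_and]⟩

open scoped Classical in
lemma sum_leaves_ite_mem {A : Type*} [AddCommMonoid A] (T : ThresholdTree d) (x : Fin d → ℝ)
    (φ : Set (Fin d → ℝ) → A) :
    (T.leaves.map fun B => if x ∈ B then φ B else 0).sum = φ (T.leafOf x) := by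
  induction T generalizing φ with
  | leaf => simp [leafOf, leaves]
  | node i θ l r hl hr =>
    simp only [leafOf, leaves, List.map_append, List.map_map, List.sum_append]
    by_cases hx : x i ≤ θ
    · rw [if_pos hx, ← hl fun B => φ (B ∩ {y | y i ≤ θ})]
      simp [Function.comp_def, hx, hx.not_gt]
    · rw [if_neg hx, ← hr fun B => φ (B ∩ {y | θ < y i})]
      simp [Function.comp_def, hx, not_le.mp hx]

open scoped Classical in
lemma sum_leaves_sum_filter {A : Type*} [AddCommMonoid A] (T : ThresholdTree d)
    (𝒳 : Multiset (Fin d → ℝ)) (f : (Fin d → ℝ) → Set (Fin d → ℝ) → A) :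
    (T.leaves.map fun B => ((𝒳.filter (· ∈ B)).map (f · B)).sum).sum =
      (𝒳.map fun x => f x (T.leafOf x)).sum := by
  induction 𝒳 using Multiset.induction_on with
  | empty => simp
  | cons x 𝒳 ih =>
    rw [Multiset.map_cons, Multiset.sum_cons, ← ih, ← sum_leaves_ite_mem T x (f x),
      ← List.sum_map_add]
    congr! 3 with B
    by_cases hx : x ∈ B <;> simp [hx]

open scoped Classical in
lemma sum_leaves_card_filter (T : ThresholdTree d) (U : Finset (Fin d → ℝ)) :
    (T.leaves.map fun B => (U.filter (· ∈ B)).card).sum = U.card := by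
  simpa only [Multiset.map_const', Multiset.sum_replicate, smul_eq_mul, mul_one,
    ← Finset.filter_val, Finset.card_val] using sum_leaves_sum_filter T U.val fun _ _ => (1 : ℕ)

open scoped Classical in
lemma separates_iff_card_filter {U : Finset (Fin d → ℝ)} :
    T.Separates U ↔ ∀ B ∈ T.leaves, (U.filter (· ∈ B)).card = 1 :=
  forall₂_congr fun B _ => by
    rw [Finset.card_eq_one, Finset.singleton_iff_unique_mem]
    simp only [Finset.mem_filter]

lemma Separates.length_leaves {U : Finset (Fin d → ℝ)} (hT : T.Separates U) :
    T.leaves.length = U.card := by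
  classical
  rw [← sum_leaves_card_filter T U, List.map_congr_left (separates_iff_card_filter.mp hT)]
  simp

lemma exists_two_mem_leaf_of_not_separates {U : Finset (Fin d → ℝ)}
    (hcard : T.leaves.length ≤ U.card) (hT : ¬ T.Separates U) :
    ∃ B ∈ T.leaves, ∃ u ∈ U, ∃ v ∈ U, u ≠ v ∧ u ∈ B ∧ v ∈ B := by
  classical
  obtain ⟨B₁, hB₁, hne⟩ : ∃ B ∈ T.leaves, (U.filter (· ∈ B)).card ≠ 1 := by
    simpa [separates_iff_card_filter] using hT
  suffices ∃ B ∈ T.leaves, 1 < (U.filter (· ∈ B)).card by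
    obtain ⟨B, hB, hlt⟩ := this
    obtain ⟨u, hu, v, hv, huv⟩ := Finset.one_lt_card.mp hlt
    rw [Finset.mem_filter] at hu hv
    exact ⟨B, hB, u, hu.1, v, hv.1, huv, hu.2, hv.2⟩
  by_contra! hle
  have hlt : (T.leaves.map fun B => (U.filter (· ∈ B)).card).sum <
      (T.leaves.map fun _ => 1).sum :=
    List.sum_lt_sum _ _ hle ⟨B₁, hB₁, (hle B₁ hB₁).lt_of_ne hne⟩
  rw [sum_leaves_card_filter, List.map_const', List.sum_replicate, smul_eq_mul, mul_one] at hlt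
  exact hcard.not_gt hlt

lemma Separates.node {U : Finset (Fin d → ℝ)} {i : Fin d} {θ : ℝ} {l r : ThresholdTree d}
    (hl : l.Separates (U.filter fun x => x i ≤ θ)) (hr : r.Separates (U.filter fun x => θ < x i)) :
    (node i θ l r).Separates U := by
  simp only [Separates, leaves, List.mem_append, List.mem_map, Finset.mem_filter] at hl hr ⊢
  rintro _ (⟨B, hB, rfl⟩ | ⟨B, hB, rfl⟩)
  · simpa [and_assoc, and_comm, and_left_comm] using hl B hB
  · simpa [and_assoc, and_comm, and_left_comm] using hr B hB

lemma exists_separates {U : Finset (Fin d → ℝ)} (hU : U.Nonempty) :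
    ∃ T : ThresholdTree d, T.Separates U := by
  induction U using Finset.strongInduction with
  | H U ih =>
  obtain ⟨u, rfl⟩ | ⟨u, hu, v, hv, huv⟩ := hU.exists_eq_singleton_or_nontrivial
  · exact ⟨leaf, by simp [Separates, leaves]⟩
  · obtain ⟨i, hi⟩ := Function.ne_iff.mp huv
    wlog hlt : u i < v i generalizing u v
    · exact this v hv u hu huv.symm hi.symm (hi.lt_or_gt.resolve_left hlt)
    obtain ⟨l, hl⟩ := ih (U.filter fun x => x i ≤ u i)
      (Finset.filter_ssubset.mpr ⟨v, hv, hlt.not_ge⟩) ⟨u, by simp [Finset.mem_coe.mp hu]⟩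
    obtain ⟨r, hr⟩ := ih (U.filter fun x => u i < x i)
      (Finset.filter_ssubset.mpr ⟨u, hu, lt_irrefl _⟩) ⟨v, by simp [Finset.mem_coe.mp hv, hlt]⟩
    exact ⟨_, hl.node hr⟩

end ThresholdTree

open ThresholdTree

section MedianCost

variable {d : ℕ}

/-- The `ℓ₁` distance `‖x - y‖₁`, as the metric of `PiLp 1`. -/
noncomputable abbrev l1Dist (x y : Fin d → ℝ) : ℝ := dist (WithLp.toLp 1 x) (WithLp.toLp 1 y)

lemma l1Dist_eq_sum (x y : Fin d → ℝ) : l1Dist x y = ∑ i, |x i - y i| := by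
  simp [l1Dist, PiLp.dist_eq_of_L1, Real.dist_eq]

/-- The cost `Σ_{x∈𝒴} ‖x - μ‖₁` of serving the points of `𝒴` from the center `μ`. -/
noncomputable def medianCost (𝒴 : Multiset (Fin d → ℝ)) (μ : Fin d → ℝ) : ℝ :=
  (𝒴.map (l1Dist · μ)).sum

lemma medianCost_nonneg (𝒴 : Multiset (Fin d → ℝ)) (μ : Fin d → ℝ) : 0 ≤ medianCost 𝒴 μ :=
  Multiset.sum_nonneg fun _ h => by
    obtain ⟨x, -, rfl⟩ := Multiset.mem_map.mp h
    exact dist_nonneg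

lemma medianCost_add (𝒴 𝒵 : Multiset (Fin d → ℝ)) (μ : Fin d → ℝ) :
    medianCost (𝒴 + 𝒵) μ = medianCost 𝒴 μ + medianCost 𝒵 μ := by
  simp [medianCost]

lemma medianCost_replicate (n : ℕ) (u μ : Fin d → ℝ) :
    medianCost (Multiset.replicate n u) μ = n * l1Dist u μ := by
  simp [medianCost]

lemma medianCost_mono {𝒴 𝒵 : Multiset (Fin d → ℝ)} (h : 𝒴 ≤ 𝒵) (μ : Fin d → ℝ) :
    medianCost 𝒴 μ ≤ medianCost 𝒵 μ := by
  obtain ⟨𝒲, rfl⟩ := Multiset.le_iff_exists_add.mp h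
  rw [medianCost_add]
  exact le_add_of_nonneg_right (medianCost_nonneg _ _)

-- A point carrying at least half of the mass is a 1-median.
lemma medianCost_le_medianCost_add_replicate (A : Multiset (Fin d → ℝ)) (u μ : Fin d → ℝ) :
    medianCost A u ≤ medianCost (A + Multiset.replicate A.card u) μ :=
  calc medianCost A u
      ≤ (A.map fun x => l1Dist x μ + l1Dist u μ).sum :=
        Multiset.sum_map_le_sum_map _ _ fun _ _ => dist_triangle_right _ _ _
    _ = medianCost (A + Multiset.replicate A.card u) μ := by
        simp [medianCost]

variable {𝒳 : Multiset (Fin d → ℝ)} {B : Set (Fin d → ℝ)} {T : ThresholdTree d}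

open scoped Classical in
lemma leafMedCost_eq_iInf (𝒳 : Multiset (Fin d → ℝ)) (B : Set (Fin d → ℝ)) :
    leafMedCost 𝒳 B = ⨅ μ, medianCost (𝒳.filter (· ∈ B)) μ := by
  simp only [medianCost, l1Dist_eq_sum]
  rfl

open scoped Classical in
lemma leafMedCost_le (𝒳 : Multiset (Fin d → ℝ)) (B : Set (Fin d → ℝ)) (μ : Fin d → ℝ) :
    leafMedCost 𝒳 B ≤ medianCost (𝒳.filter (· ∈ B)) μ := by
  rw [leafMedCost_eq_iInf]
  exact ciInf_le ⟨0, Set.forall_mem_range.mpr fun _ => medianCost_nonneg _ _⟩ μ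

lemma leafMedCost_nonneg (𝒳 : Multiset (Fin d → ℝ)) (B : Set (Fin d → ℝ)) :
    0 ≤ leafMedCost 𝒳 B := by
  classical
  rw [leafMedCost_eq_iInf]
  exact Real.iInf_nonneg fun _ => medianCost_nonneg _ _

open scoped Classical in
lemma medianCost_filter_le_leafMedCost {A : Multiset (Fin d → ℝ)} {u : Fin d → ℝ}
    (hA : A + Multiset.replicate A.card u ≤ 𝒳) (hu : u ∈ B) :
    medianCost (A.filter (· ∈ B)) u ≤ leafMedCost 𝒳 B := by
  rw [leafMedCost_eq_iInf]
  refine le_ciInf fun μ => (medianCost_le_medianCost_add_replicate _ u μ).trans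
    (medianCost_mono ?_ μ)
  calc A.filter (· ∈ B) + Multiset.replicate (A.filter (· ∈ B)).card u
      ≤ A.filter (· ∈ B) + Multiset.replicate A.card u := by
        gcongr
        exact Multiset.filter_le _ _
    _ = (A + Multiset.replicate A.card u).filter (· ∈ B) := by
        rw [Multiset.filter_add, Multiset.filter_eq_self (s := Multiset.replicate _ u) |>.mpr
          fun v hv => Multiset.eq_of_mem_replicate hv ▸ hu]
    _ ≤ 𝒳.filter (· ∈ B) := Multiset.filter_le_filter _ hA

lemma explCost_nonneg (T : ThresholdTree d) (𝒳 : Multiset (Fin d → ℝ)) : 0 ≤ explCost T 𝒳 :=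
  List.sum_nonneg fun _ h => by
    obtain ⟨B, -, rfl⟩ := List.mem_map.mp h
    exact leafMedCost_nonneg _ _

lemma leafMedCost_le_explCost (hB : B ∈ T.leaves) : leafMedCost 𝒳 B ≤ explCost T 𝒳 := by
  refine List.single_le_sum (fun _ h => ?_) _ (List.mem_map_of_mem hB)
  obtain ⟨B, -, rfl⟩ := List.mem_map.mp h
  exact leafMedCost_nonneg _ _

lemma explCost_le (T : ThresholdTree d) (𝒳 : Multiset (Fin d → ℝ))
    (c : Set (Fin d → ℝ) → Fin d → ℝ) :
    explCost T 𝒳 ≤ (𝒳.map fun x => l1Dist x (c (T.leafOf x))).sum := by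
  classical
  rw [← sum_leaves_sum_filter T 𝒳 fun x B => l1Dist x (c B)]
  exact List.sum_le_sum fun B _ => leafMedCost_le 𝒳 B (c B)

lemma le_explCost {A : Multiset (Fin d → ℝ)} {c : Set (Fin d → ℝ) → Fin d → ℝ}
    (hc : ∀ B ∈ T.leaves, c B ∈ B)
    (hA : ∀ B ∈ T.leaves, A + Multiset.replicate A.card (c B) ≤ 𝒳) :
    (A.map fun x => l1Dist x (c (T.leafOf x))).sum ≤ explCost T 𝒳 := by
  classical
  rw [← sum_leaves_sum_filter T A fun x B => l1Dist x (c B)]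
  exact List.sum_le_sum fun B hB => medianCost_filter_le_leafMedCost (hA B hB) (hc B hB)

lemma mul_l1Dist_le_explCost {u v : Fin d → ℝ} {M : ℕ}
    (h : Multiset.replicate M u + Multiset.replicate M v ≤ 𝒳)
    (hB : B ∈ T.leaves) (hu : u ∈ B) (hv : v ∈ B) : M * l1Dist u v ≤ explCost T 𝒳 := by
  classical
  calc M * l1Dist u v
      = medianCost ((Multiset.replicate M u).filter (· ∈ B)) v := by
        rw [Multiset.filter_eq_self.mpr fun w hw => Multiset.eq_of_mem_replicate hw ▸ hu,
          medianCost_replicate]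
    _ ≤ leafMedCost 𝒳 B := medianCost_filter_le_leafMedCost (by simpa using h) hv
    _ ≤ explCost T 𝒳 := leafMedCost_le_explCost hB

end MedianCost

section Ind

variable {d : ℕ}

@[simp]
lemma ind_empty : ind (∅ : Finset (Fin d)) = 0 := by
  ext
  simp [ind]

lemma half_lt_ind_iff {S : Finset (Fin d)} {j : Fin d} : 1 / 2 < ind S j ↔ j ∈ S := by
  by_cases hj : j ∈ S <;> simp [ind, hj]
  norm_num

lemma ind_le_half_iff {S : Finset (Fin d)} {j : Fin d} : ind S j ≤ 1 / 2 ↔ j ∉ S := by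
  rw [← not_lt, half_lt_ind_iff]

lemma ind_injective : Function.Injective (ind : Finset (Fin d) → Fin d → ℝ) := fun S S' h => by
  ext j
  rw [← half_lt_ind_iff, h, half_lt_ind_iff]

lemma l1Dist_ind (S S' : Finset (Fin d)) : l1Dist (ind S) (ind S') = (symmDiff S S').card := by
  have habs (j : Fin d) : |ind S j - ind S' j| = if j ∈ symmDiff S S' then 1 else 0 := by
    by_cases hS : j ∈ S <;> by_cases hS' : j ∈ S' <;> simp [ind, hS, hS', Finset.mem_symmDiff]
  simp [l1Dist_eq_sum, habs]

lemma one_le_l1Dist_ind {S S' : Finset (Fin d)} (h : S ≠ S') : 1 ≤ l1Dist (ind S) (ind S') := by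
  rw [l1Dist_ind, Nat.one_le_cast, Nat.one_le_iff_ne_zero, Finset.card_ne_zero,
    Finset.nonempty_iff_ne_empty]
  exact fun hbot => h (symmDiff_eq_bot.mp hbot)

lemma l1Dist_ind_zero (S : Finset (Fin d)) : l1Dist (ind S) 0 = S.card := by
  rw [← ind_empty, l1Dist_ind, ← Finset.bot_eq_empty, symmDiff_bot]

lemma l1Dist_ind_singleton_zero (j : Fin d) : l1Dist (ind {j}) 0 = 1 := by
  rw [l1Dist_ind_zero, Finset.card_singleton, Nat.cast_one]

lemma l1Dist_ind_singleton_of_mem {j : Fin d} {S : Finset (Fin d)} (hj : j ∈ S) :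
    l1Dist (ind {j}) (ind S) = S.card - 1 := by
  rw [l1Dist_ind, symmDiff_of_le (Finset.singleton_subset_iff.mpr hj),
    Finset.sdiff_singleton_eq_erase, Finset.cast_card_erase_of_mem hj]

lemma card_sub_one_le_l1Dist_ind_singleton (j : Fin d) (S : Finset (Fin d)) :
    S.card - 1 ≤ l1Dist (ind {j}) (ind S) := by
  have htri : l1Dist (ind S) 0 ≤ l1Dist (ind {j}) (ind S) + l1Dist (ind {j}) 0 :=
    dist_triangle_left _ _ _
  rw [l1Dist_ind_zero, l1Dist_ind_singleton_zero] at htri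
  exact sub_le_iff_le_add.mpr htri

lemma exists_mem_ind_singleton_notMem_leaf {T : ThresholdTree d} {B : Set (Fin d → ℝ)}
    (hB : B ∈ T.leaves) (h0 : 0 ∈ B) {S : Finset (Fin d)} (hS : ind S ∉ B) :
    ∃ j ∈ S, ind {j} ∉ B := by
  obtain ⟨I, rfl⟩ := exists_eq_pi_of_mem_leaves hB
  simp only [Set.mem_univ_pi, not_forall] at h0 hS ⊢
  obtain ⟨j, hj⟩ := hS
  have hjS : j ∈ S := by
    by_contra hjS
    exact hj (by simpa [ind, hjS] using h0 j)
  exact ⟨j, hjS, j, by simpa [ind, hjS] using hj⟩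

lemma filter_ind_le_half (F : Finset (Finset (Fin d))) (a : Fin d) :
    (insert 0 (F.image ind)).filter (fun x => x a ≤ 1 / 2) =
      insert 0 ((F.filter (a ∉ ·)).image ind) := by
  rw [Finset.filter_insert, if_pos (by simp), Finset.filter_image]
  simp only [ind_le_half_iff]

lemma filter_half_lt_ind (F : Finset (Finset (Fin d))) (a : Fin d) :
    (insert 0 (F.image ind)).filter (fun x => 1 / 2 < x a) = (F.filter (a ∈ ·)).image ind := by
  rw [Finset.filter_insert, if_neg (by simp), Finset.filter_image]
  simp only [half_lt_ind_iff]

lemma exists_separates_of_hitting (H : Finset (Fin d)) (F : Finset (Finset (Fin d)))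
    (hH : ∀ S ∈ F, (H ∩ S).Nonempty) :
    ∃ T : ThresholdTree d, T.Separates (insert 0 (F.image ind)) ∧
      ∀ j, 0 ∈ T.leafOf (ind {j}) ∨ j ∈ H ∧ ∃ S ∈ F, j ∈ S ∧ ind S ∈ T.leafOf (ind {j}) := by
  induction H using Finset.induction_on generalizing F with
  | empty =>
    obtain rfl : F = ∅ := Finset.eq_empty_of_forall_notMem fun S hS => by simpa using hH S hS
    exact ⟨leaf, by simp [Separates, leaves], fun j => .inl (by simp [leafOf])⟩
  | insert a H ha ih =>
    obtain ⟨l, hl, hleaf⟩ := ih (F.filter (a ∉ ·)) fun S hS => by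
      rw [Finset.mem_filter] at hS
      simpa [Finset.insert_inter_of_notMem hS.2] using hH S hS.1
    rcases (F.filter (a ∈ ·)).eq_empty_or_nonempty with hFa | hFa
    · -- Cutting coordinate `a` would separate no center and waste a leaf.
      rw [Finset.filter_eq_self.mpr (Finset.filter_eq_empty_iff.mp hFa)] at hl hleaf
      exact ⟨l, hl, fun j => (hleaf j).imp_right (.imp_left Finset.mem_insert_of_mem)⟩
    obtain ⟨r, hr⟩ := exists_separates (hFa.image ind)
    refine ⟨node a (1 / 2) l r, .node ?_ ?_, fun j => ?_⟩
    · rwa [filter_ind_le_half]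
    · rwa [filter_half_lt_ind]
    · by_cases haj : j = a
      · subst haj
        obtain ⟨u, ⟨hu, hur⟩, -⟩ := hr _ (leafOf_mem_leaves r (ind {j}))
        obtain ⟨S, hS, rfl⟩ := Finset.mem_image.mp hu
        rw [Finset.mem_filter] at hS
        rw [leafOf, if_neg (not_le.mpr (half_lt_ind_iff.mpr (by simp)))]
        exact .inr ⟨Finset.mem_insert_self _ _, S, hS.1, hS.2, hur, half_lt_ind_iff.mpr hS.2⟩
      · rw [leafOf, if_pos (ind_le_half_iff.mpr (by simpa using Ne.symm haj))]
        refine (hleaf j).imp (fun h0 => ⟨h0, by simp⟩) ?_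
        rintro ⟨hjH, S, hS, hjS, hSl⟩
        rw [Finset.mem_filter] at hS
        exact ⟨Finset.mem_insert_of_mem hjH, S, hS.1, hjS, hSl, ind_le_half_iff.mpr hS.2⟩

end Ind

section DataSet

variable {d k : ℕ}

/-- The multiset of centers `μ₀ = 0` and `μ_i = Σ_{j ∈ S_i} e_j`, each repeated `M` times in
`𝒳_M`. -/
def centers (Sets : Fin k → Finset (Fin d)) : Multiset (Fin d → ℝ) :=
  0 ::ₘ Finset.univ.val.map fun i => ind (Sets i)

/-- The multiset of standard basis vectors `e₁, …, e_d`. -/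
def basisVectors (d : ℕ) : Multiset (Fin d → ℝ) := Finset.univ.val.map fun j => ind {j}

variable {Sets : Fin k → Finset (Fin d)}

lemma dataSet_eq (M : ℕ) (Sets : Fin k → Finset (Fin d)) :
    dataSet d k M Sets = basisVectors d + M • centers Sets := rfl

lemma card_basisVectors (d : ℕ) : (basisVectors d).card = d := by simp [basisVectors]

lemma sum_map_basisVectors (f : (Fin d → ℝ) → ℝ) :
    ((basisVectors d).map f).sum = ∑ j, f (ind {j}) := by
  rw [basisVectors, Multiset.map_map]
  rfl

lemma mem_centers {u : Fin d → ℝ} : u ∈ centers Sets ↔ u = 0 ∨ ∃ i, ind (Sets i) = u := by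
  simp [centers]

lemma card_centers (Sets : Fin k → Finset (Fin d)) : (centers Sets).card = k + 1 := by
  simp [centers]

lemma nodup_centers (hinj : Function.Injective Sets) (hne : ∀ i, (Sets i).Nonempty) :
    (centers Sets).Nodup := by
  refine Multiset.nodup_cons.mpr ⟨?_, Finset.univ.nodup.map (ind_injective.comp hinj)⟩
  simp [← ind_empty, ind_injective.eq_iff, (hne _).ne_empty]

lemma toFinset_centers (Sets : Fin k → Finset (Fin d)) :
    (centers Sets).toFinset = insert 0 ((Finset.univ.image Sets).image ind) := by
  ext
  simp [mem_centers]

lemma one_le_l1Dist_of_mem_centers {u v : Fin d → ℝ} (hu : u ∈ centers Sets)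
    (hv : v ∈ centers Sets) (huv : u ≠ v) : 1 ≤ l1Dist u v := by
  have exists_ind {w : Fin d → ℝ} (hw : w ∈ centers Sets) : ∃ S, ind S = w := by
    rcases mem_centers.mp hw with rfl | ⟨i, rfl⟩
    exacts [⟨∅, ind_empty⟩, ⟨_, rfl⟩]
  obtain ⟨S, rfl⟩ := exists_ind hu
  obtain ⟨S', rfl⟩ := exists_ind hv
  exact one_le_l1Dist_ind (ne_of_apply_ne ind huv)

lemma basisVectors_add_replicate_le_dataSet {M : ℕ} (hM : d ≤ M) {u : Fin d → ℝ}
    (hu : u ∈ centers Sets) :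
    basisVectors d + Multiset.replicate (basisVectors d).card u ≤ dataSet d k M Sets := by
  rw [dataSet_eq, card_basisVectors]
  gcongr
  calc Multiset.replicate d u ≤ Multiset.replicate M u := Multiset.replicate_mono u hM
    _ = M • {u} := (Multiset.nsmul_singleton u M).symm
    _ ≤ M • centers Sets := nsmul_le_nsmul_right (Multiset.singleton_le.mpr hu) M

lemma replicate_add_replicate_le_dataSet (M : ℕ) {u v : Fin d → ℝ} (hu : u ∈ centers Sets)
    (hv : v ∈ centers Sets) (huv : u ≠ v) :
    Multiset.replicate M u + Multiset.replicate M v ≤ dataSet d k M Sets := by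
  have hle : {u} + {v} ≤ centers Sets :=
    (Multiset.le_iff_subset (by simpa using huv)).mpr (by simp [hu, hv])
  calc Multiset.replicate M u + Multiset.replicate M v
      = M • ({u} + {v}) := by simp only [nsmul_add, Multiset.nsmul_singleton]
    _ ≤ M • centers Sets := nsmul_le_nsmul_right hle M
    _ ≤ dataSet d k M Sets := Multiset.le_add_left _ _

lemma explCost_dataSet_le {T : ThresholdTree d} (M : ℕ) {c : Set (Fin d → ℝ) → Fin d → ℝ}
    (hc : ∀ B ∈ T.leaves, ∀ u ∈ centers Sets, u ∈ B → u = c B) :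
    explCost T (dataSet d k M Sets) ≤ ∑ j, l1Dist (ind {j}) (c (T.leafOf (ind {j}))) := by
  have hcenters : ((centers Sets).map fun u => l1Dist u (c (T.leafOf u))).sum = 0 := by
    refine Multiset.sum_eq_zero fun t ht => ?_
    obtain ⟨u, hu, rfl⟩ := Multiset.mem_map.mp ht
    rw [← hc _ (leafOf_mem_leaves T u) u hu (mem_leafOf T u)]
    exact dist_self _
  calc explCost T (dataSet d k M Sets)
      ≤ ((basisVectors d + M • centers Sets).map fun x => l1Dist x (c (T.leafOf x))).sum :=
        explCost_le T _ c
    _ = ∑ j, l1Dist (ind {j}) (c (T.leafOf (ind {j}))) := by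
        rw [Multiset.map_add, Multiset.sum_add, Multiset.map_nsmul, Multiset.sum_nsmul, hcenters,
          smul_zero, add_zero, sum_map_basisVectors]

lemma le_explCost_dataSet {T : ThresholdTree d} {M : ℕ} (hM : d ≤ M)
    {c : Set (Fin d → ℝ) → Fin d → ℝ} (hc : ∀ B ∈ T.leaves, c B ∈ centers Sets ∧ c B ∈ B) :
    ∑ j, l1Dist (ind {j}) (c (T.leafOf (ind {j}))) ≤ explCost T (dataSet d k M Sets) := by
  rw [← sum_map_basisVectors fun x => l1Dist x (c (T.leafOf x))]
  exact le_explCost (fun B hB => (hc B hB).2) fun B hB =>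
    basisVectors_add_replicate_le_dataSet hM (hc B hB).1

lemma le_explCost_dataSet_of_not_separates {T : ThresholdTree d} (hinj : Function.Injective Sets)
    (hne : ∀ i, (Sets i).Nonempty) (hlen : T.leaves.length ≤ k + 1)
    (hT : ¬ T.Separates (centers Sets).toFinset) (M : ℕ) :
    M ≤ explCost T (dataSet d k M Sets) := by
  have hcard : (centers Sets).toFinset.card = k + 1 := by
    rw [Multiset.toFinset_card_of_nodup (nodup_centers hinj hne), card_centers]
  obtain ⟨B, hB, u, hu, v, hv, huv, huB, hvB⟩ :=
    exists_two_mem_leaf_of_not_separates (hlen.trans_eq hcard.symm) hT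
  rw [Multiset.mem_toFinset] at hu hv
  calc (M : ℝ)
      ≤ M * l1Dist u v :=
        le_mul_of_one_le_right M.cast_nonneg (one_le_l1Dist_of_mem_centers hu hv huv)
    _ ≤ explCost T (dataSet d k M Sets) :=
        mul_l1Dist_le_explCost (replicate_add_replicate_le_dataSet M hu hv huv) hB huB hvB

lemma sum_one_add_ite_mem (H : Finset (Fin d)) (t : ℝ) :
    ∑ j, (1 + if j ∈ H then t else 0) = d + H.card * t := by
  simp [Finset.sum_add_distrib]

lemma exists_explCost_dataSet_le_of_hitting {s : ℕ} (hs : 2 ≤ s) (hcard : ∀ i, (Sets i).card ≤ s)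
    {H : Finset (Fin d)} (hH : ∀ i, (H ∩ Sets i).Nonempty) :
    ∃ T : ThresholdTree d, T.leaves.length ≤ k + 1 ∧
      ∀ M, explCost T (dataSet d k M Sets) ≤ d + H.card * ((s : ℝ) - 2) := by
  obtain ⟨T, hT, hleaf⟩ :=
    exists_separates_of_hitting H (Finset.univ.image Sets) (by simpa using hH)
  rw [← toFinset_centers] at hT
  refine ⟨T, ?_, fun M => ?_⟩
  · rw [hT.length_leaves, ← card_centers Sets]
    exact Multiset.toFinset_card_le _
  choose! c _ hc using hT
  replace hc : ∀ B ∈ T.leaves, ∀ u ∈ centers Sets, u ∈ B → u = c B := fun B hB u hu huB =>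
    hc B hB u ⟨Multiset.mem_toFinset.mpr hu, huB⟩
  refine (explCost_dataSet_le M hc).trans ?_
  rw [← sum_one_add_ite_mem]
  refine Finset.sum_le_sum fun j _ => ?_
  have hs' : (0 : ℝ) ≤ s - 2 := sub_nonneg.mpr (Nat.ofNat_le_cast.mpr hs)
  rcases hleaf j with h0 | ⟨hjH, S, hS, hjS, hSj⟩
  · rw [← hc _ (leafOf_mem_leaves _ _) 0 (mem_centers.mpr (.inl rfl)) h0,
      l1Dist_ind_singleton_zero]
    split_ifs <;> linarith
  · obtain ⟨i, -, rfl⟩ := Finset.mem_image.mp hS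
    rw [← hc _ (leafOf_mem_leaves _ _) _ (mem_centers.mpr (.inr ⟨i, rfl⟩)) hSj,
      l1Dist_ind_singleton_of_mem hjS, if_pos hjH]
    have hi : ((Sets i).card : ℝ) ≤ s := Nat.cast_le.mpr (hcard i)
    linarith

lemma exists_hitting_le_explCost_dataSet_of_separates {s : ℕ} (hs : 2 ≤ s)
    (hcard : ∀ i, s ≤ (Sets i).card) {T : ThresholdTree d}
    (hT : T.Separates (centers Sets).toFinset) {M : ℕ} (hM : d ≤ M) :
    ∃ H : Finset (Fin d), (∀ i, (H ∩ Sets i).Nonempty) ∧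
      d + H.card * ((s : ℝ) - 2) ≤ explCost T (dataSet d k M Sets) := by
  classical
  have h0 := mem_leafOf T 0
  have hleaf0 := leafOf_mem_leaves T 0
  refine ⟨Finset.univ.filter fun j => ind {j} ∉ T.leafOf 0, fun i => ?_, ?_⟩
  · have hi : ind (Sets i) ∉ T.leafOf 0 := fun hi => by
      have heq : ind (Sets i) = 0 := (hT _ hleaf0).unique
        ⟨by simp [mem_centers], hi⟩ ⟨by simp [mem_centers], h0⟩
      have hne : (Sets i).Nonempty := Finset.card_pos.mp (zero_lt_two.trans_le (hs.trans (hcard i)))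
      exact hne.ne_empty (ind_injective (heq.trans ind_empty.symm))
    obtain ⟨j, hjS, hj⟩ := exists_mem_ind_singleton_notMem_leaf hleaf0 h0 hi
    exact ⟨j, by simp [hj, hjS]⟩
  choose! c hc _ using hT
  replace hc : ∀ B ∈ T.leaves, c B ∈ centers Sets ∧ c B ∈ B := fun B hB =>
    (hc B hB).imp_left Multiset.mem_toFinset.mp
  refine le_trans ?_ (le_explCost_dataSet hM hc)
  rw [← sum_one_add_ite_mem]
  refine Finset.sum_le_sum fun j _ => ?_
  obtain ⟨hcj, hcB⟩ := hc _ (leafOf_mem_leaves T (ind {j}))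
  rcases mem_centers.mp hcj with hzero | ⟨i, hi⟩
  · rw [hzero, mem_leafOf_comm] at hcB
    simp [hzero, hcB, l1Dist_ind_singleton_zero]
  · rw [← hi]
    have hs' : (2 : ℝ) ≤ s := Nat.ofNat_le_cast.mpr hs
    have hsi : (s : ℝ) ≤ (Sets i).card := Nat.cast_le.mpr (hcard i)
    have hdist := card_sub_one_le_l1Dist_ind_singleton j (Sets i)
    split_ifs <;> linarith

lemma OPTM_le_explCost {T : ThresholdTree d} (hT : T.leaves.length ≤ k + 1) (M : ℕ) :
    OPTM d k M Sets ≤ explCost T (dataSet d k M Sets) := by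
  refine csInf_le ⟨0, ?_⟩ ⟨T, hT, rfl⟩
  rintro _ ⟨T, -, rfl⟩
  exact explCost_nonneg _ _

lemma le_OPTM {M : ℕ} {a : ℝ}
    (ha : ∀ T : ThresholdTree d, T.leaves.length ≤ k + 1 → a ≤ explCost T (dataSet d k M Sets)) :
    a ≤ OPTM d k M Sets := by
  refine le_csInf ⟨_, leaf, by simp [leaves], rfl⟩ ?_
  rintro _ ⟨T, hT, rfl⟩
  exact ha T hT

lemma OPTM_le_of_hitting {s : ℕ} (hs : 2 ≤ s) (hcard : ∀ i, (Sets i).card ≤ s)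
    {H : Finset (Fin d)} (hH : ∀ i, (H ∩ Sets i).Nonempty) (M : ℕ) :
    OPTM d k M Sets ≤ d + H.card * ((s : ℝ) - 2) := by
  obtain ⟨T, hT, hcost⟩ := exists_explCost_dataSet_le_of_hitting hs hcard hH
  exact (OPTM_le_explCost hT M).trans (hcost M)

lemma le_OPTM_of_le_card_hitting {s : ℕ} (hs : 2 ≤ s) (hinj : Function.Injective Sets)
    (hcard : ∀ i, s ≤ (Sets i).card) {h : ℕ}
    (hmin : ∀ H : Finset (Fin d), (∀ i, (H ∩ Sets i).Nonempty) → h ≤ H.card) {M : ℕ}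
    (hM : d + h * ((s : ℝ) - 2) ≤ M) :
    d + h * ((s : ℝ) - 2) ≤ OPTM d k M Sets := by
  have hs' : (0 : ℝ) ≤ s - 2 := sub_nonneg.mpr (Nat.ofNat_le_cast.mpr hs)
  have hne (i) : (Sets i).Nonempty := Finset.card_pos.mp (zero_lt_two.trans_le (hs.trans (hcard i)))
  refine le_OPTM fun T hlen => ?_
  by_cases hT : T.Separates (centers Sets).toFinset
  · have hdM : d ≤ M :=
      Nat.cast_le.mp ((le_add_of_nonneg_right (mul_nonneg h.cast_nonneg hs')).trans hM)
    obtain ⟨H, hH, hcost⟩ := exists_hitting_le_explCost_dataSet_of_separates hs hcard hT hdM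
    refine le_trans ?_ hcost
    gcongr
    exact hmin H hH
  · exact hM.trans (le_explCost_dataSet_of_not_separates hinj hne hlen hT M)

end DataSet

theorem stmt17_general (d k s : ℕ) (hs : 2 ≤ s)
    (Sets : Fin k → Finset (Fin d)) (hinj : Function.Injective Sets)
    (hcard : ∀ i, (Sets i).card = s) (h : ℕ)
    (hex : ∃ H : Finset (Fin d), (∀ i, (H ∩ Sets i).Nonempty) ∧ H.card = h)
    (hmin : ∀ H : Finset (Fin d), (∀ i, (H ∩ Sets i).Nonempty) → h ≤ H.card) :
    (∀ M : ℕ, OPTM d k M Sets ≤ d + h * ((s : ℝ) - 2)) ∧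
    ∀ M : ℕ, d + h * ((s : ℝ) - 2) ≤ M → OPTM d k M Sets = d + h * ((s : ℝ) - 2) := by
  have hle (M : ℕ) : OPTM d k M Sets ≤ d + h * ((s : ℝ) - 2) := by
    obtain ⟨H, hH, rfl⟩ := hex
    exact OPTM_le_of_hitting hs (fun i => (hcard i).le) hH M
  exact ⟨hle, fun M hM => (hle M).antisymm
    (le_OPTM_of_le_card_hitting hs hinj (fun i => (hcard i).ge) hmin hM)⟩

/-- the hitting-set reduction. For the instance `𝒳_M` built from an
`s`-uniform family `S₁,…,S_k` with minimum hitting set size `h`: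
(a) `OPT_M ≤ d + h(s−2)` for all `M ≥ 1`, and
(b) for every `ε > 0`, `OPT_M ≥ d + h(s−2−ε)` for all large enough `M`. -/
theorem stmt17 (d k s : ℕ) (hd : 1 ≤ d) (hk : 1 ≤ k) (hs : 2 ≤ s)
    (Sets : Fin k → Finset (Fin d)) (hinj : Function.Injective Sets)
    (hne : ∀ i, (Sets i).Nonempty) (hcard : ∀ i, (Sets i).card = s)
    (h : ℕ)
    (hex : ∃ H : Finset (Fin d), (∀ i, (H ∩ Sets i).Nonempty) ∧ H.card = h)
    (hmin : ∀ H : Finset (Fin d), (∀ i, (H ∩ Sets i).Nonempty) → h ≤ H.card) :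
    (∀ M : ℕ, 1 ≤ M →
        OPTM d k M Sets ≤ (d : ℝ) + (h : ℝ) * ((s : ℝ) - 2)) ∧
    (∀ ε : ℝ, 0 < ε → ∃ M₀ : ℕ, ∀ M : ℕ, M₀ ≤ M →
        (d : ℝ) + (h : ℝ) * ((s : ℝ) - 2 - ε) ≤ OPTM d k M Sets) := by
  obtain ⟨hle, heq⟩ := stmt17_general d k s hs Sets hinj hcard h hex hmin
  refine ⟨fun M _ => hle M, fun ε hε => ⟨_, fun M hM => (heq M (Nat.ceil_le.mp hM)).ge.trans' ?_⟩⟩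
  gcongr _ + _ * ?_
  exact sub_le_self _ hε.le
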